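/- Let Y be a finite subset of ℂ and let x₀ ∈ ℂ with x₀ ∉ Y. Then the fundamental group π₁(ℂ \ Y, x₀) of the complement of Y in ℂ (with its standard topology), based at x₀, is isomorphic as a group to the free group F(Y) on the set Y. In particular, π₁(ℂ \ Y, x₀) is a free group of rank |Y|. -/

import Mathlib

/-!
The punctured plane is covered by two slit planes. After a horizontal shear the points of `Y` have
distinct abscissas; `U true` is the plane minus the vertical rays going up from these points,
`U false` the plane minus the rays going down. Both retract vertically onto a horizontal line, so
they are simply connected, and their intersection is the disjoint union of the `|Y| + 1` open
vertical strips cut out by the points: a leftmost one, and one immediately to the right of each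
point. These data are recorded in the structure `SplitCover`, with index set `Y`.

For any split cover with index set `ι`, the fundamental group is free on `ι`. Instead of the van
Kampen theorem, the argument constructs the universal covering: glue `U true × FreeGroup ι` and
`U false × FreeGroup ι` over the strip `W k` by left multiplication by the generator `k` (by `1`
over the base strip). The result is a covering `E` on which `FreeGroup ι` acts by right
translations, simply transitively on the fibers (`isQuotientCoveringMap_p`). It is path connected
because going round through `W k` multiplies the fiber coordinate by the generator `k`.

It is simply connected for the following reason. Going out through `U true` and back through
`U false` defines a loop for each strip, hence a homomorphism `psi` from the free group to the
fundamental group of the base. A point `e` of `E` with coordinate `g` in the chart `i` is sent to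
the class `phi e` of paths given by `psi g` followed by a path in `U i`; the gluing makes this
independent of the chart, and along any path in `E` the class `phi` changes by the projected path
(`phi_trans`). So a loop of `E` projects to a null-homotopic loop, and is itself null-homotopic by
homotopy lifting. The fundamental group of the base is then the group of deck transformations,
which is the free group.
-/

open Topology unitInterval

/-- A topological space `X` written as the union of two open simply connected sets
`U true` and `U false`, whose intersection is the disjoint union of nonempty path connected
open sets `W k`, indexed by `Option ι`. The piece `W none` plays the role of a base piece. -/
structure SplitCover (X ι : Type*) [TopologicalSpace X] where
  /-- The two open sets covering the space. -/
  U : Bool → Set X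
  /-- The components of the intersection of the two open sets. -/
  W : Option ι → Set X
  isOpen_U : ∀ i, IsOpen (U i)
  cover : ∀ x, ∃ i, x ∈ U i
  simply : ∀ i, IsSimplyConnected (U i)
  isOpen_W : ∀ k, IsOpen (W k)
  pathConn_W : ∀ k, IsPathConnected (W k)
  disj : ∀ x k l, x ∈ W k → x ∈ W l → k = l
  W_subset : ∀ k i, W k ⊆ U i
  inter : ∀ x, x ∈ U true → x ∈ U false → ∃ k, x ∈ W k

namespace SplitCover

variable {X ι : Type*} [TopologicalSpace X] (D : SplitCover X ι)

/-- The free group is given the discrete topology, so that it can serve as a fiber of a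
covering. -/
local instance freeGroupTopology : TopologicalSpace (FreeGroup ι) := ⊥

local instance : DiscreteTopology (FreeGroup ι) := ⟨rfl⟩

/-! ### The covering with fiber the free group -/

/-- The element of the free group attached to a component of the intersection: the base
component gives `1`, the others give the free generators. -/
def gen : Option ι → FreeGroup ι
  | none => 1
  | some k => FreeGroup.of k

open Classical in
/-- The gauge of the chart `i` at `x`: the coordinate change from the chart `true` to the chart
`i` is left multiplication by it. It is meaningful only on `U true ∩ U false`. -/
noncomputable def tau (i : Bool) (x : X) : FreeGroup ι :=
  if i = false then (if h : ∃ k, x ∈ D.W k then gen h.choose else 1) else 1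

lemma tau_true (x : X) : D.tau true x = 1 := by simp [tau]

lemma tau_false {x : X} {k : Option ι} (hx : x ∈ D.W k) : D.tau false x = gen k := by
  have h : ∃ k, x ∈ D.W k := ⟨k, hx⟩
  simp [tau, h, D.disj x _ _ h.choose_spec hx]

/-- An index of a chart around `x`. -/
noncomputable def idx (x : X) : Bool := (D.cover x).choose

lemma mem_idx (x : X) : x ∈ D.U (D.idx x) := (D.cover x).choose_spec

lemma exists_mem_W {i j : Bool} (hij : i ≠ j) {x : X} (hi : x ∈ D.U i) (hj : x ∈ D.U j) :
    ∃ k, x ∈ D.W k := by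
  cases i <;> cases j <;> simp_all [D.inter x]

lemma tau_eq_of_mem {i : Bool} {k : Option ι} {x y : X} (hx : x ∈ D.W k) (hy : y ∈ D.W k) :
    D.tau i x = D.tau i y := by
  cases i
  · rw [D.tau_false hx, D.tau_false hy]
  · rw [D.tau_true, D.tau_true]

/-- The principal bundle with structure group `FreeGroup ι`, trivial over `U true` and
`U false`, whose transition function is `gen k` on `W k`. -/
noncomputable def core : FiberBundleCore Bool X (FreeGroup ι) where
  baseSet := D.U
  isOpen_baseSet := D.isOpen_U
  indexAt := D.idx
  mem_baseSet_at := D.mem_idx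
  coordChange i j x g := D.tau j x * (D.tau i x)⁻¹ * g
  coordChange_self i x _ g := by group
  coordChange_comp i j k x _ g := by group
  continuousOn_coordChange i j := by
    by_cases hij : i = j
    · subst hij
      simpa using continuous_snd.continuousOn
    · rintro ⟨x, g⟩ ⟨⟨hi, hj⟩, -⟩
      obtain ⟨k, hk⟩ := D.exists_mem_W hij hi hj
      -- the transition function is constant on the open set `W k`
      have h : ContinuousAt (fun p : X × FreeGroup ι ↦ D.tau j x * (D.tau i x)⁻¹ * p.2) (x, g) :=
        (continuous_of_discreteTopology (f := fun g ↦ D.tau j x * (D.tau i x)⁻¹ * g)).continuousAt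
          |>.comp continuousAt_snd
      refine (h.congr ?_).continuousWithinAt
      filter_upwards [((D.isOpen_W k).prod isOpen_univ).mem_nhds ⟨hk, Set.mem_univ g⟩] with p hp
      rw [D.tau_eq_of_mem hk hp.1, D.tau_eq_of_mem hk hp.1]

/-- The total space of the bundle `core`; it turns out to be the universal covering of `X`. -/
abbrev E := D.core.TotalSpace

/-- The projection of the covering. -/
noncomputable abbrev p : D.E → X := D.core.proj

/-- The fiber coordinate of a point in the chart `i`; junk outside the preimage of `U i`. -/
noncomputable def coord (i : Bool) (e : D.E) : FreeGroup ι := (D.core.localTriv i e).2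

/-- The point above `x` with coordinate `g` in the chart `i`; junk for `x` outside `U i`. -/
noncomputable def mkPt (i : Bool) (x : X) (g : FreeGroup ι) : D.E :=
  (D.core.localTriv i).toOpenPartialHomeomorph.symm (x, g)

@[simp] lemma p_mkPt (i : Bool) (x : X) (g : FreeGroup ι) : D.p (D.mkPt i x g) = x := rfl

lemma localTriv_eq (i : Bool) (e : D.E) : D.core.localTriv i e = (D.p e, D.coord i e) := rfl

lemma coord_mkPt {i : Bool} {x : X} (hx : x ∈ D.U i) (g : FreeGroup ι) :
    D.coord i (D.mkPt i x g) = g := by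
  have := (D.core.localTriv i).apply_symm_apply (x := (x, g))
    ((D.core.mem_localTriv_target i _).2 hx)
  exact congrArg Prod.snd this

lemma mkPt_coord {i : Bool} {e : D.E} (he : D.p e ∈ D.U i) :
    D.mkPt i (D.p e) (D.coord i e) = e :=
  (D.core.localTriv i).symm_apply_apply (x := e) he

lemma ext_coord {i : Bool} {e e' : D.E} (he : D.p e ∈ D.U i) (h : D.p e = D.p e')
    (hc : D.coord i e = D.coord i e') : e = e' := by
  rw [← D.mkPt_coord he, h, hc, D.mkPt_coord (h ▸ he)]

lemma coord_change {i j : Bool} {e : D.E} (hi : D.p e ∈ D.U i) (hj : D.p e ∈ D.U j) :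
    D.coord j e = D.tau j (D.p e) * (D.tau i (D.p e))⁻¹ * D.coord i e :=
  (D.core.coordChange_comp (D.idx (D.p e)) i j (D.p e) ⟨⟨D.mem_idx _, hi⟩, hj⟩ e.2).symm

lemma mkPt_change {i j : Bool} {x : X} (hi : x ∈ D.U i) (hj : x ∈ D.U j) (g : FreeGroup ι) :
    D.mkPt i x g = D.mkPt j x (D.tau j x * (D.tau i x)⁻¹ * g) := by
  refine D.ext_coord (i := j) hj rfl ?_
  rw [D.coord_mkPt hj, D.coord_change (i := i) hi hj, D.coord_mkPt hi]
  rfl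

lemma isCoveringMap_p : IsCoveringMap D.p :=
  IsFiberBundle.isCoveringMap fun x ↦ ⟨D.core.localTriv (D.idx x), D.mem_idx x⟩

lemma continuousOn_coord (i : Bool) : ContinuousOn (D.coord i) (D.p ⁻¹' D.U i) :=
  continuous_snd.comp_continuousOn (D.core.localTriv i).continuousOn

lemma continuousOn_mkPt (i : Bool) (g : FreeGroup ι) :
    ContinuousOn (fun x ↦ D.mkPt i x g) (D.U i) := by
  exact (D.core.localTriv i).toOpenPartialHomeomorph.continuousOn_symm.comp
    (f := fun x ↦ (x, g)) (by fun_prop) fun x hx ↦ (D.core.mem_localTriv_target i _).2 hx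

/-! ### The action of the free group -/

/-- The free group acts by right translations in the fibers. -/
noncomputable instance : MulAction (FreeGroup ι) D.E where
  smul g e := D.mkPt (D.idx (D.p e)) (D.p e) (D.coord (D.idx (D.p e)) e * g⁻¹)
  one_smul e := by
    change D.mkPt (D.idx (D.p e)) (D.p e) (D.coord (D.idx (D.p e)) e * 1⁻¹) = e
    rw [inv_one, mul_one, D.mkPt_coord (D.mem_idx _)]
  mul_smul g h e := by
    change D.mkPt (D.idx (D.p e)) (D.p e) (D.coord (D.idx (D.p e)) e * (g * h)⁻¹) =
      D.mkPt (D.idx (D.p e)) (D.p e) (D.coord (D.idx (D.p e))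
        (D.mkPt (D.idx (D.p e)) (D.p e) (D.coord (D.idx (D.p e)) e * h⁻¹)) * g⁻¹)
    rw [D.coord_mkPt (D.mem_idx _)]
    group

@[simp] lemma p_smul (g : FreeGroup ι) (e : D.E) : D.p (g • e) = D.p e := rfl

lemma coord_smul {i : Bool} (g : FreeGroup ι) {e : D.E} (he : D.p e ∈ D.U i) :
    D.coord i (g • e) = D.coord i e * g⁻¹ := by
  have h : D.coord (D.idx (D.p e)) (g • e) = D.coord (D.idx (D.p e)) e * g⁻¹ :=
    D.coord_mkPt (D.mem_idx _) _
  rw [D.coord_change (e := g • e) (i := D.idx (D.p e)) (D.mem_idx _) he, h,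
    D.coord_change (i := D.idx (D.p e)) (D.mem_idx _) he, p_smul]
  group

lemma isQuotientCoveringMap_p : IsQuotientCoveringMap D.p (FreeGroup ι) := by
  refine (isQuotientCoveringMap_iff_isCoveringMap_and _ _).2
    ⟨D.isCoveringMap_p, fun x ↦ ⟨D.mkPt (D.idx x) x 1, rfl⟩, ⟨fun g ↦ ?_⟩, ?_, ?_⟩
  · refine continuous_iff_continuousAt.2 fun e ↦ ?_
    have he : D.p e ∈ D.U (D.idx (D.p e)) := D.mem_idx _
    refine (D.core.localTriv (D.idx (D.p e))).continuousAt_of_comp_left ?_ he ?_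
    · exact D.isCoveringMap_p.continuous.continuousAt
    · have hnhds : D.p ⁻¹' D.U (D.idx (D.p e)) ∈ 𝓝 e :=
        ((D.isOpen_U _).preimage D.isCoveringMap_p.continuous).mem_nhds he
      have h : ContinuousAt (fun e' ↦ (D.p e', D.coord (D.idx (D.p e)) e' * g⁻¹)) e :=
        D.isCoveringMap_p.continuous.continuousAt.prodMk
          ((continuous_of_discreteTopology (f := fun x : FreeGroup ι ↦ x * g⁻¹)).continuousAt.comp
            ((D.continuousOn_coord _).continuousAt hnhds))
      refine h.congr ?_
      filter_upwards [hnhds] with e' he'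
      rw [Function.comp_apply, localTriv_eq, p_smul, D.coord_smul g he']
  · refine ⟨fun g g' e h ↦ ?_⟩
    have := congrArg (D.coord (D.idx (D.p e))) h
    rw [D.coord_smul _ (D.mem_idx _), D.coord_smul _ (D.mem_idx _)] at this
    simpa using this
  · intro e e'
    refine ⟨fun h ↦ ⟨(D.coord (D.idx (D.p e)) e)⁻¹ * D.coord (D.idx (D.p e)) e', ?_⟩, ?_⟩
    · refine D.ext_coord (i := D.idx (D.p e)) ?_ h.symm ?_
      · simpa [h] using D.mem_idx (D.p e')
      · change D.coord _ (_ • e') = _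
        rw [D.coord_smul _ (h ▸ D.mem_idx _)]
        group
    · rintro ⟨g, rfl⟩
      rfl

/-! ### Path connectedness of the covering -/

/-- A base point in the base piece `W none`. -/
noncomputable def base : X := (D.pathConn_W none).nonempty.some

lemma base_mem_W : D.base ∈ D.W none := (D.pathConn_W none).nonempty.some_mem

lemma base_mem (i : Bool) : D.base ∈ D.U i := D.W_subset none i D.base_mem_W

lemma joined_mkPt {i : Bool} {x y : X} (hx : x ∈ D.U i) (hy : y ∈ D.U i) (g : FreeGroup ι) :
    Joined (D.mkPt i x g) (D.mkPt i y g) := by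
  have := (D.simply i).simplyConnectedSpace
  exact (PathConnectedSpace.joined (⟨x, hx⟩ : D.U i) ⟨y, hy⟩).map
    (f := fun z : D.U i ↦ D.mkPt i z g) (D.continuousOn_mkPt i g).domRestrict

lemma mkPt_base (i j : Bool) (g : FreeGroup ι) :
    D.mkPt i D.base g = D.mkPt j D.base g := by
  have h (i : Bool) : D.tau i D.base = 1 := by
    cases i
    · exact D.tau_false D.base_mem_W
    · exact D.tau_true _
  rw [D.mkPt_change (D.base_mem i) (D.base_mem j), h, h]
  simp

/-- Going from the base point to `W k` in one chart and coming back in the other one changes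
the coordinate by `gen k`. -/
lemma joined_gen (k : Option ι) (g : FreeGroup ι) :
    Joined (D.mkPt true D.base g) (D.mkPt true D.base (gen k * g)) := by
  obtain ⟨x, hx⟩ := (D.pathConn_W k).nonempty
  have h1 := D.joined_mkPt (D.base_mem true) (D.W_subset k true hx) g
  have h2 := D.joined_mkPt (D.W_subset k false hx) (D.base_mem false) (gen k * g)
  rw [D.mkPt_base false true] at h2
  rw [D.mkPt_change (D.W_subset k true hx) (D.W_subset k false hx), D.tau_false hx, D.tau_true,
    inv_one, mul_one] at h1
  exact h1.trans h2

lemma joined_base (w g : FreeGroup ι) :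
    Joined (D.mkPt true D.base g) (D.mkPt true D.base (w * g)) := by
  induction w using FreeGroup.induction_on generalizing g with
  | C1 => simpa using Joined.refl _
  | of k => exact D.joined_gen (some k) g
  | inv_of k _ =>
    have := D.joined_gen (some k) ((FreeGroup.of k)⁻¹ * g)
    simp only [gen, mul_inv_cancel_left] at this
    exact this.symm
  | mul a b ha hb =>
    rw [mul_assoc]
    exact (hb g).trans (ha _)

lemma pathConnectedSpace_E : PathConnectedSpace D.E := by
  have key (e : D.E) : Joined (D.mkPt true D.base 1) e := by
    have h1 := D.joined_mkPt (D.base_mem _) (D.mem_idx (D.p e)) (D.coord (D.idx (D.p e)) e)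
    rw [D.mkPt_coord (D.mem_idx _), D.mkPt_base _ true] at h1
    have h2 := D.joined_base (D.coord (D.idx (D.p e)) e) 1
    rw [mul_one] at h2
    exact h2.trans h1
  exact ⟨⟨D.mkPt true D.base 1⟩, fun e e' ↦ (key e).symm.trans (key e')⟩

/-! ### Simple connectedness of the covering -/

/-- The class in `X` of the paths in `U i` from the base point to `x`. -/
noncomputable def alpha (i : Bool) (x : X) (hx : x ∈ D.U i) :
    Path.Homotopic.Quotient D.base x :=
  have := (D.simply i).simplyConnectedSpace
  .mk ((PathConnectedSpace.somePath (⟨D.base, D.base_mem i⟩ : D.U i) ⟨x, hx⟩).map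
    continuous_subtype_val)

lemma alpha_trans {i : Bool} {x y : X} (hx : x ∈ D.U i) (hy : y ∈ D.U i) (γ : Path x y)
    (hγ : ∀ s, γ s ∈ D.U i) :
    (D.alpha i x hx).trans (.mk γ) = D.alpha i y hy := by
  have := (D.simply i).simplyConnectedSpace
  let γ' : Path (⟨x, hx⟩ : D.U i) ⟨y, hy⟩ :=
    { toFun s := ⟨γ s, hγ s⟩
      source' := by simp
      target' := by simp }
  rw [alpha, alpha, ← Path.Homotopic.Quotient.mk_trans, Path.Homotopic.Quotient.eq]
  have h := SimplyConnectedSpace.paths_homotopic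
    ((PathConnectedSpace.somePath (⟨D.base, D.base_mem i⟩ : D.U i) ⟨x, hx⟩).trans γ')
    (PathConnectedSpace.somePath (⟨D.base, D.base_mem i⟩ : D.U i) ⟨y, hy⟩)
  have h' := h.map ⟨Subtype.val, continuous_subtype_val⟩
  convert! h' using 1
  exact (Path.map_trans _ γ' continuous_subtype_val).symm

lemma alpha_base (i : Bool) : D.alpha i D.base (D.base_mem i) = .refl D.base := by
  have := (D.simply i).simplyConnectedSpace
  rw [alpha, ← Path.Homotopic.Quotient.mk_refl, Path.Homotopic.Quotient.eq]
  exact (SimplyConnectedSpace.paths_homotopic _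
    (Path.refl (⟨D.base, D.base_mem i⟩ : D.U i))).map ⟨Subtype.val, continuous_subtype_val⟩

/-- The class of the loop that goes to `x` through `U true` and comes back through `U false`. -/
noncomputable def loop (x : X) (h1 : x ∈ D.U true) (h2 : x ∈ D.U false) :
    FundamentalGroup X D.base :=
  .fromPath ((D.alpha true x h1).trans (D.alpha false x h2).symm)

lemma loop_eq {k : Option ι} {x y : X} (hx : x ∈ D.W k) (hy : y ∈ D.W k) :
    D.loop x (D.W_subset k _ hx) (D.W_subset k _ hx) =
      D.loop y (D.W_subset k _ hy) (D.W_subset k _ hy) := by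
  obtain ⟨γ, hγ⟩ := (D.pathConn_W k).joinedIn x hx y hy
  rw [loop, loop, ← D.alpha_trans (D.W_subset k true hx) (D.W_subset k true hy) γ
    fun s ↦ D.W_subset k _ (hγ s),
    ← D.alpha_trans (D.W_subset k false hx) (D.W_subset k false hy) γ
    fun s ↦ D.W_subset k _ (hγ s)]
  generalize D.alpha true x _ = a
  generalize D.alpha false x _ = b
  generalize Path.Homotopic.Quotient.mk γ = c
  have h : (b.trans c).symm = c.symm.trans b.symm := by
    induction b using Path.Homotopic.Quotient.ind with | mk b
    induction c using Path.Homotopic.Quotient.ind with | mk c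
    rw [← Path.Homotopic.Quotient.mk_trans, ← Path.Homotopic.Quotient.mk_symm, Path.trans_symm]
    rfl
  rw [h, Path.Homotopic.Quotient.trans_assoc, ← Path.Homotopic.Quotient.trans_assoc c,
    Path.Homotopic.Quotient.trans_symm, Path.Homotopic.Quotient.refl_trans]

/-- The homomorphism sending the generator `k` to the loop through `W (some k)`. -/
noncomputable def psi : FreeGroup ι →* FundamentalGroup X D.base :=
  FreeGroup.lift fun k ↦ D.loop (D.pathConn_W (some k)).nonempty.some
    (D.W_subset _ _ (D.pathConn_W (some k)).nonempty.some_mem)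
    (D.W_subset _ _ (D.pathConn_W (some k)).nonempty.some_mem)

lemma psi_gen {k : Option ι} {x : X} (hx : x ∈ D.W k) :
    D.psi (gen k) = D.loop x (D.W_subset k _ hx) (D.W_subset k _ hx) := by
  cases k with
  | none =>
    rw [D.loop_eq hx D.base_mem_W, loop, alpha_base, alpha_base, gen, map_one,
      FundamentalGroup.one_def]
    simp
  | some k =>
    rw [gen, psi, FreeGroup.lift_apply_of]
    exact D.loop_eq (D.pathConn_W (some k)).nonempty.some_mem hx

/-- A class of paths in `X` from the base point to the image of `e`, computed in the chart
`i`. -/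
noncomputable def phiAux (i : Bool) (e : D.E) (he : D.p e ∈ D.U i) :
    Path.Homotopic.Quotient D.base (D.p e) :=
  (D.psi (D.coord i e)).toPath.trans (D.alpha i (D.p e) he)

lemma phiAux_true_false (e : D.E) (h1 : D.p e ∈ D.U true) (h2 : D.p e ∈ D.U false) :
    D.phiAux true e h1 = D.phiAux false e h2 := by
  obtain ⟨k, hk⟩ := D.inter _ h1 h2
  have : D.coord false e = gen k * D.coord true e := by
    rw [D.coord_change h1 h2, D.tau_true, D.tau_false hk]
    simp
  rw [phiAux, phiAux, this, map_mul, D.psi_gen hk, FundamentalGroup.mul_def, loop]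
  generalize D.psi _ = a
  generalize D.alpha true _ _ = b
  generalize D.alpha false _ _ = c
  simp

lemma phiAux_eq (e : D.E) {i j : Bool} (hi : D.p e ∈ D.U i) (hj : D.p e ∈ D.U j) :
    D.phiAux i e hi = D.phiAux j e hj := by
  cases i <;> cases j
  · rfl
  · exact (D.phiAux_true_false e hj hi).symm
  · exact D.phiAux_true_false e hi hj
  · rfl

/-- The comparison map from the covering to the homotopy classes of paths of `X` starting at
the base point. -/
noncomputable def phi (e : D.E) : Path.Homotopic.Quotient D.base (D.p e) :=
  D.phiAux (D.idx (D.p e)) e (D.mem_idx _)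

/-- Along a path in the covering that stays above a single chart, `phi` changes by the class of
the projected path: the fiber coordinate is constant. -/
lemma phi_trans_of_mem {i : Bool} {e e' : D.E} (γ : Path e e') (hγ : ∀ s, D.p (γ s) ∈ D.U i) :
    (D.phi e).trans (.mk (γ.map D.isCoveringMap_p.continuous)) = D.phi e' := by
  have he : D.p e ∈ D.U i := by simpa using hγ 0
  have he' : D.p e' ∈ D.U i := by simpa using hγ 1
  have hc : Continuous fun s ↦ D.coord i (γ s) :=
    (D.continuousOn_coord i).comp_continuous γ.continuous hγ
  have hcoord : D.coord i e = D.coord i e' := by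
    simpa using PreconnectedSpace.constant inferInstance hc (x := 0) (y := 1)
  rw [phi, phi, D.phiAux_eq e _ he, D.phiAux_eq e' _ he', phiAux, phiAux, ← hcoord,
    ← D.alpha_trans he he' (γ.map D.isCoveringMap_p.continuous) hγ]
  exact Path.Homotopic.Quotient.trans_assoc _ _ _

/-- Along any path in the covering, `phi` changes by the class of the projected path. -/
lemma phi_trans {e e' : D.E} (γ : Path e e') :
    (D.phi e).trans (.mk (γ.map D.isCoveringMap_p.continuous)) = D.phi e' := by
  have hp := D.isCoveringMap_p.continuous
  obtain ⟨t, t0, tmono, ⟨n, hn⟩, ht⟩ := exists_monotone_Icc_subset_open_cover_unitInterval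
    (c := fun i ↦ (fun s ↦ D.p (γ s)) ⁻¹' D.U i)
    (fun i ↦ (D.isOpen_U i).preimage (hp.comp γ.continuous))
    (fun s _ ↦ Set.mem_iUnion.2 (D.cover (D.p (γ s))))
  have key (m : ℕ) : (D.phi (γ (t 0))).trans (.mk ((γ.subpath (t 0) (t m)).map hp)) =
      D.phi (γ (t m)) := by
    induction m with
    | zero =>
      rw [Path.subpath_self]
      exact Path.Homotopic.Quotient.trans_refl _
    | succ m ih =>
      obtain ⟨i, hi⟩ := ht m
      have h := D.phi_trans_of_mem (γ.subpath (t m) (t (m + 1))) (i := i) fun s ↦ by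
        have : γ.subpath (t m) (t (m + 1)) s ∈ Set.range (γ.subpath (t m) (t (m + 1))) := ⟨s, rfl⟩
        rw [Path.range_subpath_of_le _ _ _ (tmono m.le_succ)] at this
        obtain ⟨u, hu, hus⟩ := this
        rw [← hus]
        exact hi hu
      rw [← h, ← ih]
      have h2 : (γ.subpath (t 0) (t m)).trans (γ.subpath (t m) (t (m + 1))) |>.Homotopic
          (γ.subpath (t 0) (t (m + 1))) := ⟨Path.Homotopy.subpathTransSubpath _ _ _ _⟩
      have h3 := h2.map ⟨D.p, hp⟩
      have h4 := Path.Homotopic.Quotient.eq.2 h3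
      rw [Path.Homotopic.Quotient.trans_assoc, ← Path.Homotopic.Quotient.mk_trans,
        ← Path.map_trans]
      exact congrArg _ h4.symm
  have h := key n
  rw [t0, hn n le_rfl, Path.subpath_zero_one] at h
  obtain ⟨γ, rfl, rfl⟩ := γ
  exact h

theorem simplyConnectedSpace_E : SimplyConnectedSpace D.E := by
  refine simply_connected_iff_loops_nullhomotopic.2 ⟨D.pathConnectedSpace_E, fun e γ ↦ ?_⟩
  have h := D.phi_trans γ
  rw [← Path.Homotopic.Quotient.eq]
  refine D.isCoveringMap_p.injective_path_homotopic_map e e ?_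
  change Path.Homotopic.Quotient.mk (γ.map _) = Path.Homotopic.Quotient.mk ((Path.refl e).map _)
  calc _ = (D.phi e).symm.trans ((D.phi e).trans
        (.mk (γ.map D.isCoveringMap_p.continuous))) := by
          simp [← Path.Homotopic.Quotient.trans_assoc]
    _ = _ := by rw [h]; exact Path.Homotopic.Quotient.symm_trans _

/-- The fundamental group of a space with a split cover is free on the components of the
intersection other than the base one. -/
theorem nonempty_fundamentalGroup_mulEquiv {X ι : Type*} [TopologicalSpace X]
    (D : SplitCover X ι) (x : X) :
    Nonempty (FundamentalGroup X x ≃* FreeGroup ι) := by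
  have := D.simplyConnectedSpace_E
  exact ⟨(D.isQuotientCoveringMap_p.fundamentalGroupEquiv
    ⟨D.mkPt (D.idx x) x 1, rfl⟩).trans (MulEquiv.inv' (FreeGroup ι)).symm⟩

end SplitCover

/-! ### Slit planes and strips -/

/-- A planar set that retracts vertically onto a horizontal line it contains is simply
connected. -/
lemma isSimplyConnected_of_vertical {S : Set (ℝ × ℝ)} (m : ℝ) (hm : ∀ x, (x, m) ∈ S)
    (hS : ∀ p ∈ S, ∀ s ∈ unitInterval, (p.1, (1 - s) * p.2 + s * m) ∈ S) :
    IsSimplyConnected S := by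
  let e : ContinuousMap.HomotopyEquiv S ℝ :=
    { toFun := ⟨fun p ↦ p.1.1, by fun_prop⟩
      invFun := ⟨fun x ↦ ⟨(x, m), hm x⟩, by fun_prop⟩
      left_inv := by
        refine ContinuousMap.Homotopic.symm ⟨⟨⟨fun q ↦ ⟨(q.2.1.1, (1 - q.1) * q.2.1.2 + q.1 * m),
          hS _ q.2.2 _ q.1.2⟩, by fun_prop⟩, fun p ↦ ?_, fun p ↦ ?_⟩⟩
        · ext <;> simp
        · ext <;> simp
      right_inv := by
        convert! ContinuousMap.Homotopic.refl _ using 1 }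
  exact e.simplyConnectedSpace

/-- The plane with the closed vertical rays issuing from the points `(a y, b y)` removed: the
rays go up for `true` and down for `false`. -/
def slitPlane {ι : Type*} (a b : ι → ℝ) : Bool → Set (ℝ × ℝ)
  | true => {p | ∀ y, p.1 = a y → p.2 < b y}
  | false => {p | ∀ y, p.1 = a y → b y < p.2}

/-- The intervals of the complement of the points `a y`: the unbounded one to the left of all of
them for `none`, the one starting at `a y` for `some y`. -/
def gap {ι : Type*} (a : ι → ℝ) : Option ι → Set ℝ
  | none => {x | ∀ y, x < a y}
  | some y => {x | a y < x ∧ ∀ z, a y < a z → x < a z}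

section Plane

variable {ι : Type*} (a b : ι → ℝ)

lemma isOpen_slitPlane [Finite ι] (i : Bool) : IsOpen (slitPlane a b i) := by
  cases i <;> simp only [slitPlane, Set.ofPred_forall, imp_iff_not_or, Set.ofPred_or]
  all_goals
    refine isOpen_iInter_of_finite fun y ↦ ((isOpen_ne_fun ?_ ?_).union (isOpen_lt ?_ ?_)) <;>
      fun_prop

lemma exists_forall_lt [Finite ι] (b : ι → ℝ) : ∃ m, ∀ y, m < b y := by
  obtain ⟨m, hm⟩ := (Set.finite_range b).bddBelow
  exact ⟨m - 1, fun y ↦ by linarith [hm ⟨y, rfl⟩]⟩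

lemma isSimplyConnected_slitPlane [Finite ι] (i : Bool) : IsSimplyConnected (slitPlane a b i) := by
  cases i
  · obtain ⟨m, hm⟩ := exists_forall_lt fun y ↦ -b y
    refine isSimplyConnected_of_vertical (-m) (fun x y _ ↦ by linarith [hm y])
      fun p hp s hs y hy ↦ ?_
    have := hp y hy
    have := hm y
    change b y < (1 - s) * p.2 + s * -m
    rcases hs.1.eq_or_lt with rfl | h0
    · simpa
    · nlinarith [hs.2]
  · obtain ⟨m, hm⟩ := exists_forall_lt b
    refine isSimplyConnected_of_vertical m (fun x y _ ↦ hm y) fun p hp s hs y hy ↦ ?_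
    have := hp y hy
    have := hm y
    change (1 - s) * p.2 + s * m < b y
    rcases hs.1.eq_or_lt with rfl | h0
    · simpa
    · nlinarith [hs.2]

lemma isOpen_gap [Finite ι] (k : Option ι) : IsOpen (gap a k) := by
  cases k with
  | none =>
    simp only [gap, Set.ofPred_forall]
    exact isOpen_iInter_of_finite fun y ↦ isOpen_lt (by fun_prop) (by fun_prop)
  | some y =>
    simp only [gap, Set.ofPred_forall, Set.ofPred_and]
    exact (isOpen_lt (by fun_prop) (by fun_prop)).inter
      (isOpen_iInter_of_finite fun z ↦ isOpen_iInter_of_finite fun _ ↦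
        isOpen_lt (by fun_prop) (by fun_prop))

lemma ordConnected_gap (k : Option ι) : (gap a k).OrdConnected := by
  refine ⟨fun x hx y hy z hz ↦ ?_⟩
  cases k with
  | none => exact fun w ↦ hz.2.trans_lt (hy w)
  | some k => exact ⟨hx.1.trans_le hz.1, fun w hw ↦ hz.2.trans_lt (hy.2 w hw)⟩

lemma nonempty_gap [Finite ι] (k : Option ι) : (gap a k).Nonempty := by
  cases k with
  | none => exact exists_forall_lt a
  | some y =>
    have h1 : ∀ᶠ x in 𝓝[>] a y, a y < x := eventually_mem_nhdsWithin
    have h2 : ∀ᶠ x in 𝓝[>] a y, ∀ z, a y < a z → x < a z :=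
      Filter.eventually_all.2 fun z ↦ Filter.eventually_imp_distrib_left.2 fun h ↦
        nhdsWithin_le_nhds (eventually_lt_nhds h)
    exact (h1.and h2).exists

lemma ne_of_mem_gap {k : Option ι} {x : ℝ} (hx : x ∈ gap a k) (y : ι) : x ≠ a y := by
  rintro rfl
  cases k with
  | none => exact (hx y).false
  | some k => exact (hx.2 y hx.1).false

lemma gap_disjoint (ha : Function.Injective a) {k l : Option ι} {x : ℝ} (hk : x ∈ gap a k)
    (hl : x ∈ gap a l) : k = l := by
  cases k with
  | none =>
    cases l with
    | none => rfl
    | some l => exact ((hk l).trans hl.1).false.elim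
  | some k =>
    cases l with
    | none => exact ((hl k).trans hk.1).false.elim
    | some l =>
      rcases lt_trichotomy (a k) (a l) with h | h | h
      · exact ((hk.2 l h).trans hl.1).false.elim
      · rw [ha h]
      · exact ((hl.2 k h).trans hk.1).false.elim

lemma exists_mem_gap [Finite ι] {x : ℝ} (hx : ∀ y, x ≠ a y) : ∃ k, x ∈ gap a k := by
  by_cases h : ∃ y, a y < x
  · -- the gap to choose starts at the rightmost point to the left of `x`
    obtain ⟨y, hy, hmax⟩ := Set.exists_max_image {y | a y < x} a (Set.toFinite _) h
    refine ⟨some y, hy, fun z hz ↦ ?_⟩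
    by_contra! hzx
    exact (hmax z (hzx.lt_of_ne' (hx z))).not_gt hz
  · push Not at h
    exact ⟨none, fun y ↦ (h y).lt_of_ne (hx y)⟩

/-- The split cover of the plane punctured at the points `(a y, b y)`, with distinct abscissas
`a y`, by the two slit planes. The punctured plane is given as the source of an embedding. -/
noncomputable def SplitCover.ofEmbedding [Finite ι] {X : Type*} [TopologicalSpace X] {a b : ι → ℝ}
    (ha : Function.Injective a) {g : X → ℝ × ℝ} (hg : IsEmbedding g)
    (hr : ∀ p, p ∈ Set.range g ↔ ∀ y, p ≠ (a y, b y)) : SplitCover X ι :=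
  have hU (i : Bool) : g '' (g ⁻¹' slitPlane a b i) = slitPlane a b i := by
    refine Set.image_preimage_eq_of_subset fun p hp ↦ (hr p).2 ?_
    rintro y rfl
    cases i <;> exact (hp y rfl).false
  have hW (k : Option ι) : g '' (g ⁻¹' (gap a k ×ˢ Set.univ)) = gap a k ×ˢ Set.univ := by
    refine Set.image_preimage_eq_of_subset fun p hp ↦ (hr p).2 ?_
    rintro y rfl
    exact ne_of_mem_gap a hp.1 y rfl
  { U i := g ⁻¹' slitPlane a b i
    W k := g ⁻¹' (gap a k ×ˢ Set.univ)
    isOpen_U i := (isOpen_slitPlane a b i).preimage hg.continuous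
    cover x := by
      by_contra! h
      obtain ⟨h1, h2⟩ := And.intro (h true) (h false)
      simp only [slitPlane, Set.mem_preimage, Set.mem_ofPred_eq] at h1 h2
      push Not at h1 h2
      obtain ⟨y, hy, hy'⟩ := h1
      obtain ⟨z, hz, hz'⟩ := h2
      obtain rfl : y = z := ha (hy.symm.trans hz)
      exact (hr (g x)).1 ⟨x, rfl⟩ y (Prod.ext hy (le_antisymm hz' hy'))
    simply i := by
      rw [← hg.isSimplyConnected_image, hU]
      exact isSimplyConnected_slitPlane a b i
    isOpen_W k := ((isOpen_gap a k).prod isOpen_univ).preimage hg.continuous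
    pathConn_W k := by
      rw [hg.isInducing.isPathConnected_iff, hW]
      exact ((ordConnected_gap a k).convex.prod convex_univ).isPathConnected
        ((nonempty_gap a k).prod Set.univ_nonempty)
    disj x k l hk hl := gap_disjoint a ha hk.1 hl.1
    W_subset k i x hx := by
      cases i <;> exact fun y hy ↦ (ne_of_mem_gap a hx.1 y hy).elim
    inter x h1 h2 := by
      obtain ⟨k, hk⟩ := exists_mem_gap a (x := (g x).1) fun y hy ↦ ((h1 y hy).trans (h2 y hy)).false
      exact ⟨k, hk, trivial⟩ }

end Plane

/-! ### A shear that separates the abscissas -/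

/-- The plane sheared horizontally with slope `t`. -/
noncomputable def shear (t : ℝ) : ℂ ≃ₜ ℝ × ℝ where
  toFun z := (z.re - t * z.im, z.im)
  invFun p := ⟨p.1 + t * p.2, p.2⟩
  left_inv z := by simp
  right_inv p := by simp
  continuous_toFun := by fun_prop
  continuous_invFun := by
    have : Continuous fun p : ℝ × ℝ ↦ Complex.equivRealProdCLM.symm (p.1 + t * p.2, p.2) := by
      fun_prop
    exact this

/-- Two distinct points have the same sheared abscissa for at most one slope `t`, so all but
finitely many slopes separate the points of a finite set. -/
lemma exists_injective_shear (Y : Finset ℂ) :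
    ∃ t : ℝ, Function.Injective fun y : Y ↦ (shear t y).1 := by
  obtain ⟨t, ht⟩ := Set.Finite.exists_notMem
    (Set.finite_range fun q : Y × Y ↦ ((q.1 : ℂ).re - (q.2 : ℂ).re) / ((q.1 : ℂ).im - (q.2 : ℂ).im))
  refine ⟨t, fun y z hyz ↦ ?_⟩
  replace hyz : (y : ℂ).re - t * (y : ℂ).im = (z : ℂ).re - t * (z : ℂ).im := hyz
  by_cases h : (y : ℂ).im = (z : ℂ).im
  · rw [h] at hyz
    exact Subtype.ext (Complex.ext (by linarith) h)
  · refine (ht ⟨(y, z), ?_⟩).elim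
    have := sub_ne_zero.2 h
    rw [div_eq_iff this]
    linarith

/-- For a finite subset `Y` of `ℂ` and a basepoint `x₀ ∈ ℂ` with `x₀ ∉ Y`, the
fundamental group `π₁(ℂ \ Y, x₀)` of the complement of `Y` in `ℂ` is isomorphic to the
free group `F(Y)` on the set `Y`; in particular it is a free group of rank `|Y|`. -/
theorem fundamentalGroup_complement_finset_iso_freeGroup
    (Y : Finset ℂ) (x₀ : ℂ) (hx₀ : x₀ ∉ Y) :
    Nonempty (FundamentalGroup {z : ℂ // z ∉ Y} ⟨x₀, hx₀⟩ ≃* FreeGroup Y) := by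
  obtain ⟨t, ht⟩ := exists_injective_shear Y
  refine (SplitCover.ofEmbedding (b := fun y : Y ↦ (shear t y).2) ht
    ((shear t).isEmbedding.comp IsEmbedding.subtypeVal) fun p ↦ ?_)
    |>.nonempty_fundamentalGroup_mulEquiv _
  constructor
  · rintro ⟨x, rfl⟩ y h
    exact x.2 ((shear t).injective h ▸ y.2)
  · intro h
    refine ⟨⟨(shear t).symm p, fun hp ↦ h ⟨_, hp⟩ ?_⟩, ?_⟩ <;> simp
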